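/- Let V be a nonzero complex vector space and let σ, σ' : V → V be two quaternionic structures (conjugate-linear maps with σ ∘ σ = −id_V and σ' ∘ σ' = −id_V) such that σ ∘ σ' = λ·id_V for some λ ∈ ℂ. Then σ(v) = −λ·σ'(v) for all v ∈ V, |λ| = 1, and there exists μ ∈ ℂ with |μ| = 1 and μ² = −λ such that σ = (μ·id_V) ∘ σ' ∘ (μ·id_V)⁻¹. In particular σ and σ' are conjugate by a ℂ-linear automorphism of V given by a unit scalar. -/

import Mathlib

/-!
Since `σ' ∘ σ' = -id`, the inverse of `σ'` is `-σ'`, so `σ ∘ σ' = l • id` gives `σ = -l • σ'`.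
Conjugate-linearity then yields `σ ∘ σ = |l|² • (σ' ∘ σ')`, whence `|l| = 1`. For a unit scalar `μ`
the inverse is the conjugate, so conjugating `σ'` by `μ` multiplies it by `μ²`, and it remains to
take `μ` to be a square root of `-l`.
-/

theorem map_neg_of_apply_apply_eq_neg {G : Type*} [Neg G] {τ : G → G}
    (hτ : ∀ v, τ (τ v) = -v) (v : G) : τ (-v) = -τ v := by
  rw [← hτ v, hτ (τ v)]

theorem eq_neg_smul_of_apply_apply_eq_smul {R V : Type*} [Ring R] [AddCommGroup V] [Module R V]
    {σ τ : V → V} {l : R} (hτ : ∀ v, τ (τ v) = -v) (hστ : ∀ v, σ (τ v) = l • v) (v : V) :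
    σ v = (-l) • τ v :=
  calc
    σ v = σ (τ (τ (-v))) := by rw [hτ, neg_neg]
    _ = l • τ (-v) := hστ _
    _ = (-l) • τ v := by rw [map_neg_of_apply_apply_eq_neg hτ, smul_neg, neg_smul]

theorem exists_norm_eq_one_pow_eq {K : Type*} [NormedField K] [IsAlgClosed K] {n : ℕ} (hn : n ≠ 0)
    {c : K} (hc : ‖c‖ = 1) : ∃ μ : K, ‖μ‖ = 1 ∧ μ ^ n = c := by
  obtain ⟨μ, hμ⟩ := IsAlgClosed.exists_pow_nat_eq c (Nat.pos_of_ne_zero hn)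
  refine ⟨μ, ?_, hμ⟩
  rw [← pow_eq_one_iff_of_nonneg (norm_nonneg μ) hn, ← norm_pow, hμ, hc]

section ConjugateHomogeneous

variable {𝕜 V : Type*} [RCLike 𝕜] [AddCommGroup V] [Module 𝕜 V] {σ τ : V → V}

theorem smul_apply_smul_apply_eq_norm_sq_smul
    (hτ : ∀ (c : 𝕜) (v : V), τ (c • v) = starRingEnd 𝕜 c • τ v) (a : 𝕜) (v : V) :
    a • τ (a • τ v) = ((‖a‖ ^ 2 : ℝ) : 𝕜) • τ (τ v) := by
  rw [hτ, smul_smul, RCLike.mul_conj, RCLike.ofReal_pow]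

theorem norm_eq_one_of_eq_smul_of_apply_apply_eq
    (hτ : ∀ (c : 𝕜) (v : V), τ (c • v) = starRingEnd 𝕜 c • τ v) {a : 𝕜}
    (hσ : ∀ v, σ v = a • τ v) {v : V} (hστ : σ (σ v) = τ (τ v)) (hv : τ (τ v) ≠ 0) :
    ‖a‖ = 1 := by
  have hsmul : ((‖a‖ ^ 2 : ℝ) : 𝕜) • τ (τ v) = (1 : 𝕜) • τ (τ v) := by
    rw [← smul_apply_smul_apply_eq_norm_sq_smul hτ, ← hσ, ← hσ, hστ, one_smul]
  have hsq : ‖a‖ ^ 2 = 1 := by exact_mod_cast smul_left_injective 𝕜 hv hsmul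
  exact (pow_eq_one_iff_of_nonneg (norm_nonneg a) two_ne_zero).mp hsq

theorem smul_apply_inv_smul_eq_sq_smul
    (hτ : ∀ (c : 𝕜) (v : V), τ (c • v) = starRingEnd 𝕜 c • τ v) {μ : 𝕜} (hμ : ‖μ‖ = 1) (v : V) :
    μ • τ (μ⁻¹ • v) = μ ^ 2 • τ v := by
  rw [hτ, RCLike.inv_eq_conj hμ, RCLike.conj_conj, smul_smul, sq]

end ConjugateHomogeneous

theorem two_quaternionic_structures_conjugate_general {V : Type*} [AddCommGroup V] [Module ℂ V]
    [Nontrivial V] {σ σ' : V → V}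
    (hconj' : ∀ (c : ℂ) (v : V), σ' (c • v) = starRingEnd ℂ c • σ' v)
    (hσ : ∀ v, σ (σ v) = -v) (hσ' : ∀ v, σ' (σ' v) = -v)
    {l : ℂ} (hl : ∀ v, σ (σ' v) = l • v) :
    (∀ v, σ v = (-l) • σ' v) ∧ ‖l‖ = 1 ∧
      ∃ μ : ℂ, ‖μ‖ = 1 ∧ μ ^ 2 = -l ∧ ∀ v, σ v = μ • σ' (μ⁻¹ • v) := by
  have hsmul : ∀ v, σ v = (-l) • σ' v := eq_neg_smul_of_apply_apply_eq_smul hσ' hl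
  have hnorm : ‖-l‖ = 1 := by
    obtain ⟨v, hv⟩ := exists_ne (0 : V)
    refine norm_eq_one_of_eq_smul_of_apply_apply_eq hconj' hsmul ((hσ v).trans (hσ' v).symm) ?_
    rwa [hσ', neg_ne_zero]
  obtain ⟨μ, hμ, hμl⟩ := exists_norm_eq_one_pow_eq two_ne_zero hnorm
  refine ⟨hsmul, norm_neg l ▸ hnorm, μ, hμ, hμl, fun v ↦ ?_⟩
  rw [smul_apply_inv_smul_eq_sq_smul hconj' hμ, hμl, hsmul]

/-- Two quaternionic structures on a nonzero complex vector space whose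
composite is a scalar `λ` satisfy `σ = (-λ) • σ'`, `|λ| = 1`, and are conjugate by a
unit scalar `μ` with `μ² = -λ`. -/
theorem two_quaternionic_structures_conjugate
    (V : Type*) [AddCommGroup V] [Module ℂ V] [Nontrivial V]
    (σ σ' : V → V)
    (hadd : ∀ v w : V, σ (v + w) = σ v + σ w)
    (hconj : ∀ (l : ℂ) (v : V), σ (l • v) = (starRingEnd ℂ l) • σ v)
    (hadd' : ∀ v w : V, σ' (v + w) = σ' v + σ' w)
    (hconj' : ∀ (l : ℂ) (v : V), σ' (l • v) = (starRingEnd ℂ l) • σ' v)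
    (hσ : ∀ v : V, σ (σ v) = -v)
    (hσ' : ∀ v : V, σ' (σ' v) = -v)
    (l : ℂ) (hl : ∀ v : V, σ (σ' v) = l • v) :
    (∀ v : V, σ v = (-l) • σ' v) ∧
    ‖l‖ = 1 ∧
    ∃ μ : ℂ, ‖μ‖ = 1 ∧ μ ^ 2 = -l ∧ ∀ v : V, σ v = μ • σ' (μ⁻¹ • v) :=
  two_quaternionic_structures_conjugate_general hconj' hσ hσ' hl
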